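/- arXiv:2301.08185 — 2 statements merged into one kernel-verified Lean document; each statement's English description precedes it below -/
import Mathlib

section
/- For every rational number α, {−α}_q = {α}_{q⁻¹}, where {α}_{q⁻¹} denotes the image of {α}_q under the field automorphism of ℚ(q) sending q to q⁻¹. -/
/-!
Write `σ` for the substitution `q ↦ q⁻¹`. Since `{α}_q = 1 + (q - 1) [α]_q` (by `qRat_add_one`),
the theorem amounts to `[-α]_q = -q⁻¹ σ [α]_q` (`qRat_neg`).

The latter rests on two functional equations. The first is the shift `[α + 1]_q = 1 + q [α]_q`. The
second is the inversion `[α⁻¹]_q = (σ [α]_q)⁻¹` for `α > 0` (`qRat_inv`): the even levels of the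
`q`-continued fraction are the odd ones with `q` replaced by `q⁻¹` (`map_qCF`), and inverting `α`
prepends or removes an initial zero coefficient. The parity normalisation of the
continued fraction is immaterial, since the expansions `[…, a, 1]` and `[…, a + 1]` have equal
`q`-deformations (`qCF_evenize_cfNat`); thus `[α]_q` is `qCF true` of the Euclidean expansion for
every `α ≥ 0` (`qRat_of_nonneg`).

The set of `α` with `[-α]_q = -q⁻¹ σ [α]_q` is invariant under integer translation, so let
`0 ≤ α < 1`. The case `α = 0` is `[0]_q = 0`. If `0 < α < 1`, put `w = [1/α - 1]_q` and
`y = [1/α]_q = 1 + q w`. Then `σ [α]_q = y⁻¹`, while from `1/(1 - α) = 1 + 1/(1/α - 1)` one gets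
`[1 - α]_q = 1 / (1 + q⁻¹ w⁻¹) = q w / y`, and so `[-α]_q = ([1 - α]_q - 1)/q = -q⁻¹ y⁻¹`.
The denominators `w` and `y` are nonzero because every `q`-rational of a positive number
is a quotient of polynomials taking positive values at `q = 1` (`PosAtOne`).
-/

noncomputable section

open Finset

/-- The `q`-integer `[n]_q = 1 + q + ⋯ + q^{n-1}` as a rational function in `q`. -/
def qNum (n : ℕ) : RatFunc ℚ := ∑ i ∈ Finset.range n, RatFunc.X ^ i

/-- The `q⁻¹`-integer `[n]_{q⁻¹} = 1 + q⁻¹ + ⋯ + q^{-(n-1)}`. -/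
def qNumInv (n : ℕ) : RatFunc ℚ := ∑ i ∈ Finset.range n, (RatFunc.X)⁻¹ ^ i

/-- The continued fraction expansion of `p/q` computed by the Euclidean algorithm. -/
def cfNat (p q : ℕ) : List ℕ :=
  if h : q = 0 then [] else (p / q) :: cfNat q (p % q)
termination_by q
decreasing_by exact Nat.mod_lt _ (Nat.pos_of_ne_zero h)

/-- Turn a continued fraction expansion into one of even length,
replacing a final coefficient `aₙ` by `aₙ - 1, 1` if needed. -/
def evenize (l : List ℕ) : List ℕ :=
  if l.length % 2 = 0 then l else l.dropLast ++ [l.getLast! - 1, 1]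

/-- Evaluation of the Morier-Genoud--Ovsienko `q`-deformed continued fraction
`[a₁]_q + q^{a₁}/([a₂]_{q⁻¹} + q^{-a₂}/([a₃]_q + ⋯ + q^{a_{2m-1}}/[a_{2m}]_{q⁻¹}))`.
The boolean records whether the current position is odd (`true`) or even (`false`).
(The empty continued fraction is sent to `0`; since division by zero yields `0`
in `RatFunc ℚ`, a final term `[a]_{q⁻¹} + q^{-a}/0⁻ = [a]_{q⁻¹}` comes out correctly.) -/
def qCF : Bool → List ℕ → RatFunc ℚ
  | _, [] => 0
  | true, a :: l => qNum a + RatFunc.X ^ a / qCF false l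
  | false, a :: l => qNumInv a + (RatFunc.X)⁻¹ ^ a / qCF true l

/-- The Morier-Genoud--Ovsienko `q`-rational of `α > 1`, via the even-length
continued fraction expansion of `α`. -/
def qRatCF (α : ℚ) : RatFunc ℚ := qCF true (evenize (cfNat α.num.toNat α.den))

/-- The Morier-Genoud--Ovsienko `q`-rational `[α]_q ∈ ℚ(q)`, for all `α ∈ ℚ`:
for `α > 1` it is given by the `q`-deformed continued fraction, and it is
extended to all of `ℚ` by the rule `[α-1]_q = ([α]_q - 1)/q`. -/
def qRat (α : ℚ) : RatFunc ℚ :=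
  if 1 < α then qRatCF α
  else (qRatCF (α + (2 - ⌊α⌋).toNat) - qNum (2 - ⌊α⌋).toNat) / RatFunc.X ^ (2 - ⌊α⌋).toNat

/-- `{α}_q := [α+1]_q - [α]_q`, the substitute for `q^α`. -/
def qPow (α : ℚ) : RatFunc ℚ := qRat (α + 1) - qRat α

/-- The `q`-factorial `[k]_q!`. -/
def qFact (k : ℕ) : RatFunc ℚ := ∏ i ∈ Finset.range k, qNum (i + 1)

/-- The `q`-binomial coefficient `binom(α,k)_q = [α]_q [α-1]_q ⋯ [α-k+1]_q / [k]_q!`. -/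
def qBinom (α : ℚ) (k : ℕ) : RatFunc ℚ :=
  (∏ i ∈ Finset.range k, qRat (α - i)) / qFact k

/-- The Laurent-series expansion (at `q = 0`) of a rational function. -/
def lau (f : RatFunc ℚ) : LaurentSeries ℚ := ↑f


/-! ### Euclidean expansions -/

lemma cfNat_zero_right (p : ℕ) : cfNat p 0 = [] := by
  rw [cfNat]; simp

lemma cfNat_pos {q : ℕ} (p : ℕ) (hq : 0 < q) : cfNat p q = (p / q) :: cfNat q (p % q) := by
  rw [cfNat, dif_neg hq.ne']

/-- The last coefficient of the expansion of a positive rational is positive, so that `evenize`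
decreases it without truncation. -/
lemma cfNat_eq_append (q : ℕ) :
    ∀ p, 0 < q → 0 < p → ∃ (l : List ℕ) (a : ℕ), cfNat p q = l ++ [a + 1] := by
  induction q using Nat.strong_induction_on with
  | _ q ih =>
    intro p hq hp
    rw [cfNat_pos p hq]
    rcases Nat.eq_zero_or_pos (p % q) with h | h
    · have hd : 0 < p / q := Nat.div_pos (Nat.le_of_dvd hp (Nat.dvd_of_mod_eq_zero h)) hq
      exact ⟨[], p / q - 1, by rw [h, cfNat_zero_right, Nat.sub_add_cancel hd]; rfl⟩
    · obtain ⟨l, a, hl⟩ := ih (p % q) (Nat.mod_lt _ hq) q h hq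
      exact ⟨p / q :: l, a, by rw [hl]; rfl⟩

/-! ### The `q`-deformed continued fraction -/

lemma qNum_succ (n : ℕ) : qNum (n + 1) = qNum n + RatFunc.X ^ n := by
  simp [qNum, Finset.sum_range_succ]

lemma qNum_succ' (n : ℕ) : qNum (n + 1) = 1 + RatFunc.X * qNum n := by
  simp only [qNum, Finset.sum_range_succ', Finset.mul_sum]
  rw [add_comm]
  simp [pow_succ']

lemma qNumInv_succ (n : ℕ) : qNumInv (n + 1) = qNumInv n + RatFunc.X⁻¹ ^ n := by
  simp [qNumInv, Finset.sum_range_succ]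

/-- The two expansions `[…, a, 1]` and `[…, a + 1]` of a number have the same `q`-deformation. -/
lemma qCF_append_one (l : List ℕ) (a : ℕ) (b : Bool) :
    qCF b (l ++ [a, 1]) = qCF b (l ++ [a + 1]) := by
  induction l generalizing b with
  | nil => cases b <;> simp [qCF, qNum_succ, qNumInv_succ] <;> simp [qNum, qNumInv]
  | cons c l ih => cases b <;> simp [qCF, ih]

lemma qCF_evenize_cfNat (b : Bool) {p q : ℕ} (hq : 0 < q) (hp : 0 < p) :
    qCF b (evenize (cfNat p q)) = qCF b (cfNat p q) := by
  obtain ⟨l, a, h⟩ := cfNat_eq_append q p hq hp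
  rw [h, evenize]
  split_ifs
  · rfl
  · simpa using qCF_append_one l a b

/-- Substituting `q⁻¹` for `q` exchanges the roles of the odd and the even levels. -/
lemma map_qCF (σ : RatFunc ℚ →+* RatFunc ℚ) (hσX : σ RatFunc.X = (RatFunc.X)⁻¹)
    (l : List ℕ) (b : Bool) : σ (qCF b l) = qCF (!b) l := by
  induction l generalizing b with
  | nil => simp [qCF]
  | cons a l ih => cases b <;> simp [qCF, ih, qNum, qNumInv, hσX]

/-! ### Positivity -/

/-- A rational function that is a quotient of two polynomials with positive values at `1`.
This is stable under the operations of a semifield and excludes `0`. -/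
def PosAtOne (f : RatFunc ℚ) : Prop :=
  ∃ a b : Polynomial ℚ, 0 < a.eval 1 ∧ 0 < b.eval 1 ∧
    f = algebraMap (Polynomial ℚ) (RatFunc ℚ) a / algebraMap (Polynomial ℚ) (RatFunc ℚ) b

lemma algebraMap_ne_zero_of_eval_pos {a : Polynomial ℚ} (ha : 0 < a.eval 1) :
    algebraMap (Polynomial ℚ) (RatFunc ℚ) a ≠ 0 :=
  RatFunc.algebraMap_ne_zero (by rintro rfl; simp at ha)

lemma PosAtOne.ne_zero {f : RatFunc ℚ} (hf : PosAtOne f) : f ≠ 0 := by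
  obtain ⟨a, b, ha, hb, rfl⟩ := hf
  exact div_ne_zero (algebraMap_ne_zero_of_eval_pos ha) (algebraMap_ne_zero_of_eval_pos hb)

lemma PosAtOne.add {f g : RatFunc ℚ} (hf : PosAtOne f) (hg : PosAtOne g) : PosAtOne (f + g) := by
  obtain ⟨a, b, ha, hb, rfl⟩ := hf
  obtain ⟨c, d, hc, hd, rfl⟩ := hg
  refine ⟨a * d + b * c, b * d, ?_, ?_, ?_⟩
  · simp only [Polynomial.eval_add, Polynomial.eval_mul]; positivity
  · simp only [Polynomial.eval_mul]; positivity
  · rw [div_add_div _ _ (algebraMap_ne_zero_of_eval_pos hb) (algebraMap_ne_zero_of_eval_pos hd)]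
    simp

lemma PosAtOne.mul {f g : RatFunc ℚ} (hf : PosAtOne f) (hg : PosAtOne g) : PosAtOne (f * g) := by
  obtain ⟨a, b, ha, hb, rfl⟩ := hf
  obtain ⟨c, d, hc, hd, rfl⟩ := hg
  refine ⟨a * c, b * d, ?_, ?_, ?_⟩
  · simp only [Polynomial.eval_mul]; positivity
  · simp only [Polynomial.eval_mul]; positivity
  · rw [div_mul_div_comm]; simp

lemma PosAtOne.inv {f : RatFunc ℚ} (hf : PosAtOne f) : PosAtOne f⁻¹ := by
  obtain ⟨a, b, ha, hb, rfl⟩ := hf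
  exact ⟨b, a, hb, ha, by rw [inv_div]⟩

lemma posAtOne_one : PosAtOne 1 := ⟨1, 1, by simp, by simp, by simp⟩

lemma posAtOne_X : PosAtOne RatFunc.X := ⟨Polynomial.X, 1, by simp, by simp, by simp⟩

lemma PosAtOne.pow {f : RatFunc ℚ} (hf : PosAtOne f) (n : ℕ) : PosAtOne (f ^ n) := by
  induction n with
  | zero => simpa using posAtOne_one
  | succ n ih => rw [pow_succ]; exact ih.mul hf

lemma posAtOne_qNum_succ (n : ℕ) : PosAtOne (qNum (n + 1)) := by
  induction n with
  | zero => simpa [qNum] using posAtOne_one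
  | succ n ih => rw [qNum_succ]; exact ih.add (posAtOne_X.pow _)

lemma posAtOne_qNumInv_succ (n : ℕ) : PosAtOne (qNumInv (n + 1)) := by
  induction n with
  | zero => simpa [qNumInv] using posAtOne_one
  | succ n ih => rw [qNumInv_succ]; exact ih.add (posAtOne_X.inv.pow _)

/-- Only the last coefficient has to be positive: the deformed coefficients before it are either
`0` or positive at `1`. -/
lemma posAtOne_qCF (l : List ℕ) (a : ℕ) (b : Bool) : PosAtOne (qCF b (l ++ [a + 1])) := by
  induction l generalizing b with
  | nil =>
    cases b
    · simpa [qCF] using posAtOne_qNumInv_succ a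
    · simpa [qCF] using posAtOne_qNum_succ a
  | cons c l ih =>
    cases b
    · have h : PosAtOne (RatFunc.X⁻¹ ^ c / qCF true (l ++ [a + 1])) := by
        rw [div_eq_mul_inv]; exact (posAtOne_X.inv.pow c).mul (ih true).inv
      rw [List.cons_append, qCF]
      cases c with
      | zero => simpa [qNumInv] using h
      | succ c => exact (posAtOne_qNumInv_succ c).add h
    · have h : PosAtOne (RatFunc.X ^ c / qCF false (l ++ [a + 1])) := by
        rw [div_eq_mul_inv]; exact (posAtOne_X.pow c).mul (ih false).inv
      rw [List.cons_append, qCF]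
      cases c with
      | zero => simpa [qNum] using h
      | succ c => exact (posAtOne_qNum_succ c).add h

/-! ### `q`-rationals of nonnegative numbers -/

/-- The `q`-continued fraction of the Euclidean expansion of `α ≥ 0`, without normalising
the parity of its length. -/
def qEuclid (α : ℚ) : RatFunc ℚ := qCF true (cfNat α.num.toNat α.den)

lemma qRatCF_eq_qEuclid {α : ℚ} (hα : 0 < α) : qRatCF α = qEuclid α :=
  qCF_evenize_cfNat true α.pos (by have := Rat.num_pos.2 hα; omega)

lemma qEuclid_add_one {α : ℚ} (hα : 0 ≤ α) :
    qEuclid (α + 1) = 1 + RatFunc.X * qEuclid α := by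
  have hd : (α + 1).den = α.den := by simp
  have hn : (α + 1).num.toNat = α.num.toNat + α.den := by
    have h : (α + 1).num = α.num + α.den := by
      have := Rat.add_num_den' α 1
      simp [hd] at this
      exact this
    have := Rat.num_nonneg.2 hα
    omega
  rw [qEuclid, qEuclid, hd, hn, cfNat_pos _ α.pos, cfNat_pos _ α.pos,
    Nat.add_div_right _ α.pos, Nat.add_mod_right, qCF, qCF, qNum_succ', pow_succ]
  ring

lemma qEuclid_add_nat {α : ℚ} (hα : 0 ≤ α) (n : ℕ) :
    qEuclid (α + n) = qNum n + RatFunc.X ^ n * qEuclid α := by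
  induction n with
  | zero => simp [qNum]
  | succ n ih =>
    rw [Nat.cast_succ, ← add_assoc, qEuclid_add_one (by positivity), ih, qNum_succ']
    ring

lemma qEuclid_ne_zero {α : ℚ} (hα : 0 < α) : qEuclid α ≠ 0 := by
  obtain ⟨l, a, h⟩ := cfNat_eq_append α.den α.num.toNat α.pos
    (by have := Rat.num_pos.2 hα; omega)
  rw [qEuclid, h]
  exact (posAtOne_qCF l a true).ne_zero

lemma map_map_qEuclid (σ : RatFunc ℚ →+* RatFunc ℚ) (hσX : σ RatFunc.X = (RatFunc.X)⁻¹)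
    (α : ℚ) : σ (σ (qEuclid α)) = qEuclid α := by
  rw [qEuclid, map_qCF σ hσX, map_qCF σ hσX, Bool.not_not]

lemma qEuclid_inv (σ : RatFunc ℚ →+* RatFunc ℚ) (hσX : σ RatFunc.X = (RatFunc.X)⁻¹)
    {α : ℚ} (hα : 0 < α) : qEuclid α⁻¹ = (σ (qEuclid α))⁻¹ := by
  have key : ∀ β : ℚ, 1 < β → qEuclid β⁻¹ = (σ (qEuclid β))⁻¹ := by
    intro β hβ
    have hn : 0 < β.num := Rat.num_pos.2 (by linarith)
    have hlt : β.den < β.num.toNat := by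
      have := (Rat.lt_iff 1 β).1 hβ
      simp at this
      omega
    have hd : β⁻¹.den = β.num.toNat := by
      rw [Rat.den_inv, if_neg hn.ne']; omega
    have hn' : β⁻¹.num.toNat = β.den := by
      rw [Rat.num_inv, Int.sign_eq_one_of_pos hn]; simp
    rw [qEuclid, qEuclid, map_qCF σ hσX, hd, hn', cfNat_pos β.den (by omega),
      Nat.div_eq_of_lt hlt, Nat.mod_eq_of_lt hlt, qCF]
    simp [qNum]
  rcases lt_trichotomy α 1 with h | rfl | h
  · have := key α⁻¹ ((one_lt_inv₀ hα).2 h)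
    rw [inv_inv] at this
    rw [this, map_inv₀, map_map_qEuclid σ hσX, inv_inv]
  · have : qEuclid 1 = 1 := by
      simp [qEuclid, cfNat_pos, cfNat_zero_right, qCF, qNum]
    simp [this]
  · exact key α h

/-! ### `q`-rationals of arbitrary numbers -/

/-- The extension of `[·]_q` to all rationals may be computed with any shift that makes the
argument nonnegative. -/
lemma qRat_eq {α : ℚ} {n : ℕ} (h : 0 ≤ α + n) :
    qRat α = (qEuclid (α + n) - qNum n) / RatFunc.X ^ n := by
  have hX : (RatFunc.X : RatFunc ℚ) ≠ 0 := RatFunc.X_ne_zero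
  -- Admissible shifts `m ≤ m + k` give the same value.
  have shift : ∀ m k : ℕ, 0 ≤ α + m →
      (qEuclid (α + (m + k : ℕ)) - qNum (m + k)) / RatFunc.X ^ (m + k) =
        (qEuclid (α + m) - qNum m) / RatFunc.X ^ m := by
    intro m k hm
    have hnum : qNum (m + k) = qNum k + RatFunc.X ^ k * qNum m := by
      rw [add_comm, qNum, Finset.sum_range_add]
      simp [qNum, Finset.mul_sum, pow_add]
    rw [Nat.cast_add, ← add_assoc, qEuclid_add_nat hm, hnum, pow_add]
    field_simp
    ring
  have indep : ∀ m k : ℕ, 0 ≤ α + m → 0 ≤ α + k →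
      (qEuclid (α + m) - qNum m) / RatFunc.X ^ m =
        (qEuclid (α + k) - qNum k) / RatFunc.X ^ k := by
    intro m k hm hk
    rcases le_total m k with hmk | hmk
    · obtain ⟨j, rfl⟩ := Nat.exists_eq_add_of_le hmk
      exact (shift m j hm).symm
    · obtain ⟨j, rfl⟩ := Nat.exists_eq_add_of_le hmk
      exact shift k j hk
  rw [qRat]
  split_ifs with h1
  · rw [qRatCF_eq_qEuclid (by linarith), ← indep 0 n (by simp; linarith) h]
    simp [qNum]
  · have hpos : 0 < α + ((2 - ⌊α⌋).toNat : ℕ) := by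
      have h2 : (2 - ⌊α⌋ : ℚ) ≤ ((2 - ⌊α⌋).toNat : ℕ) := by
        exact_mod_cast Int.self_le_toNat (2 - ⌊α⌋)
      linarith [Int.floor_le α]
    rw [qRatCF_eq_qEuclid hpos]
    exact indep _ _ hpos.le h

lemma qRat_of_nonneg {α : ℚ} (h : 0 ≤ α) : qRat α = qEuclid α := by
  rw [qRat_eq (n := 0) (by simpa using h)]
  simp [qNum]

lemma qRat_add_one (α : ℚ) : qRat (α + 1) = 1 + RatFunc.X * qRat α := by
  have hX : (RatFunc.X : RatFunc ℚ) ≠ 0 := RatFunc.X_ne_zero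
  obtain ⟨n, hn⟩ := exists_nat_ge (-α)
  have h : α + 1 + n = α + (n + 1 : ℕ) := by push_cast; ring
  rw [qRat_eq (α := α + 1) (n := n) (by linarith),
    qRat_eq (α := α) (n := n + 1) (by push_cast; linarith), h, qNum_succ, pow_succ]
  field_simp
  ring

lemma qRat_inv (σ : RatFunc ℚ →+* RatFunc ℚ) (hσX : σ RatFunc.X = (RatFunc.X)⁻¹)
    {α : ℚ} (hα : 0 < α) : qRat α⁻¹ = (σ (qRat α))⁻¹ := by
  rw [qRat_of_nonneg hα.le, qRat_of_nonneg (inv_pos.2 hα).le, qEuclid_inv σ hσX hα]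

/-! ### The reflection `α ↦ -α` -/

/-- The reflection formula on the fundamental domain of the integer translations. -/
lemma qRat_neg_of_mem_Ico (σ : RatFunc ℚ →+* RatFunc ℚ) (hσX : σ RatFunc.X = (RatFunc.X)⁻¹)
    {α : ℚ} (h0 : 0 ≤ α) (h1 : α < 1) : qRat (-α) = -RatFunc.X⁻¹ * σ (qRat α) := by
  have hX : (RatFunc.X : RatFunc ℚ) ≠ 0 := RatFunc.X_ne_zero
  rcases h0.eq_or_lt with rfl | hpos
  · have : qRat 0 = 0 := by
      rw [qRat_of_nonneg le_rfl]
      simp [qEuclid, cfNat_pos, cfNat_zero_right, qCF, qNum]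
    simp [this]
  have hβ : 0 < α⁻¹ - 1 := sub_pos.2 ((one_lt_inv₀ hpos).2 h1)
  have hσσ : ∀ β : ℚ, 0 ≤ β → σ (σ (qRat β)) = qRat β := fun β hb => by
    rw [qRat_of_nonneg hb, map_map_qEuclid σ hσX]
  have hw : qRat (α⁻¹ - 1) ≠ 0 := by
    rw [qRat_of_nonneg hβ.le]; exact qEuclid_ne_zero hβ
  have hy : qRat α⁻¹ ≠ 0 := by
    rw [qRat_of_nonneg (inv_pos.2 hpos).le]; exact qEuclid_ne_zero (inv_pos.2 hpos)
  have hyw : qRat α⁻¹ = 1 + RatFunc.X * qRat (α⁻¹ - 1) := by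
    rw [← qRat_add_one, sub_add_cancel]
  have hσα : σ (qRat α) = (qRat α⁻¹)⁻¹ := by
    have := qRat_inv σ hσX (inv_pos.2 hpos)
    rw [inv_inv] at this
    rw [this, map_inv₀, hσσ _ (inv_pos.2 hpos).le]
  have hrefl : 1 + RatFunc.X * qRat (-α) =
      (1 + RatFunc.X⁻¹ * (qRat (α⁻¹ - 1))⁻¹)⁻¹ := by
    have hα1 : 1 - α ≠ 0 := by linarith
    have harg : -α + 1 = ((α⁻¹ - 1)⁻¹ + 1)⁻¹ := by
      have h : α⁻¹ - 1 = (1 - α) / α := by field_simp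
      rw [h, inv_div]
      field_simp
      ring
    rw [← qRat_add_one, harg, qRat_inv σ hσX (by positivity), qRat_add_one,
      qRat_inv σ hσX hβ]
    simp [hσX, hσσ _ hβ.le]
  rw [hσα]
  rw [hyw] at hy ⊢
  generalize qRat (α⁻¹ - 1) = w at *
  have hden : 1 + (RatFunc.X : RatFunc ℚ)⁻¹ * w⁻¹ = (1 + RatFunc.X * w) / (RatFunc.X * w) := by
    field_simp
    ring
  rw [hden, inv_div] at hrefl
  have h2 : RatFunc.X * qRat (-α) = -(1 + RatFunc.X * w)⁻¹ := by
    rw [eq_sub_of_add_eq' hrefl]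
    field_simp
    ring
  rw [← mul_right_inj' hX, h2]
  field_simp

lemma qRat_neg (σ : RatFunc ℚ →+* RatFunc ℚ) (hσX : σ RatFunc.X = (RatFunc.X)⁻¹) (α : ℚ) :
    qRat (-α) = -RatFunc.X⁻¹ * σ (qRat α) := by
  have hX : (RatFunc.X : RatFunc ℚ) ≠ 0 := RatFunc.X_ne_zero
  have step : ∀ β : ℚ, qRat (-β) = -RatFunc.X⁻¹ * σ (qRat β) ↔
      qRat (-(β + 1)) = -RatFunc.X⁻¹ * σ (qRat (β + 1)) := by
    intro β
    have h : qRat (-β) = 1 + RatFunc.X * qRat (-(β + 1)) := by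
      rw [← qRat_add_one]; congr 1; ring
    have hmul : RatFunc.X * (-RatFunc.X⁻¹ * (1 + RatFunc.X⁻¹ * σ (qRat β))) =
        -RatFunc.X⁻¹ * σ (qRat β) - 1 := by
      field_simp
      ring
    rw [h, qRat_add_one β, map_add, map_mul, map_one, hσX,
      ← mul_right_inj' hX (b := qRat (-(β + 1))), hmul, eq_sub_iff_add_eq']
  have all : ∀ k : ℤ, qRat (-(Int.fract α + k)) =
      -RatFunc.X⁻¹ * σ (qRat (Int.fract α + k)) := by
    intro k
    induction k using Int.induction_on with
    | zero => simpa using qRat_neg_of_mem_Ico σ hσX (Int.fract_nonneg α) (Int.fract_lt_one α)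
    | succ i ih =>
      have := (step _).1 ih
      rw [add_assoc] at this
      exact_mod_cast this
    | pred i ih =>
      refine (step _).2 ?_
      have h : Int.fract α + ((-(i : ℤ) - 1 : ℤ) : ℚ) + 1 = Int.fract α + ((-(i : ℤ) : ℤ) : ℚ) := by
        push_cast; ring
      rw [h]
      exact ih
  simpa using all ⌊α⌋

/-- `{-α}_q = {α}_{q⁻¹}`, where `{α}_{q⁻¹}` is the image of `{α}_q` under the
field automorphism of `ℚ(q)` fixing `ℚ` and sending `q` to `q⁻¹`. -/
theorem qPow_neg (α : ℚ) (σ : RatFunc ℚ →+* RatFunc ℚ)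
    (hσC : ∀ c : ℚ, σ (RatFunc.C c) = RatFunc.C c)
    (hσX : σ RatFunc.X = (RatFunc.X)⁻¹) :
    qPow (-α) = σ (qPow α) := by
  rw [qPow, qPow, qRat_add_one, qRat_add_one, qRat_neg σ hσX]
  have hX : (RatFunc.X : RatFunc ℚ) ≠ 0 := RatFunc.X_ne_zero
  simp only [map_sub, map_add, map_mul, map_one, hσX]
  field_simp
  ring

end
end

section
/- For every rational number α and every integer k ≥ 0, binom(α,k)_q = ({α}_q; q⁻¹)_k / (q;q)_k in ℚ(q), i.e. binom(α,k)_q · ∏_{i=1}^{k}(1 − q^i) = ∏_{i=0}^{k−1}(1 − q^{−i}·{α}_q). -/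
/-!
The shift rule `[α+1]_q = 1 + q[α]_q` holds for every rational `α` (`qRat_add_one`). For `α ≥ 1`
it is visible on continued fractions: adding `1` to `α` only increases the first coefficient by
`1`, and the even-length normalisation commutes with this (`qRatCF_add_one`). For smaller `α` it
follows because `[α]_q` may be computed from any sufficiently large integer translate of `α`, not
only from the one chosen in the definition (`qRat_mul_pow_add`).

Iterating the shift rule gives `[α]_q = [i]_q + q^i [α-i]_q`, while `{α}_q = 1 + (q-1)[α]_q`. Hence
`1 - q^{-i}{α}_q = (1-q)[α-i]_q` (`one_sub_mul_qPow`), and since `1 - q^{i+1} = (1-q)[i+1]_q` with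
`[i+1]_q ≠ 0`, the two sides of the identity agree factor by factor.
-/

noncomputable section

open Finset

lemma qNum_add (m n : ℕ) : qNum (m + n) = qNum m + RatFunc.X ^ m * qNum n := by
  simp only [qNum, Finset.sum_range_add, Finset.mul_sum, pow_add]

lemma one_sub_X_mul_qNum (n : ℕ) : (1 - RatFunc.X) * qNum n = 1 - RatFunc.X ^ n :=
  mul_neg_geom_sum _ _

lemma qNum_succ_ne_zero (n : ℕ) : qNum (n + 1) ≠ 0 := by
  have h : qNum (n + 1) =
      algebraMap (Polynomial ℚ) (RatFunc ℚ) (∑ i ∈ Finset.range (n + 1), Polynomial.X ^ i) := by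
    simp [qNum]
  rw [h]
  refine RatFunc.algebraMap_ne_zero fun h0 => ?_
  have h1 := congrArg (Polynomial.eval 1) h0
  simp only [Polynomial.eval_finsetSum, Polynomial.eval_pow, Polynomial.eval_X, one_pow,
    Polynomial.eval_zero, Finset.sum_const, Finset.card_range, nsmul_eq_mul, mul_one] at h1
  exact absurd h1 (Nat.cast_ne_zero.2 n.succ_ne_zero)

/-- The `q`-deformed shift on a continued fraction whose first coefficient is raised by `1`. -/
lemma qCF_succ (a : ℕ) (l : List ℕ) :
    qCF true ((a + 1) :: l) = 1 + RatFunc.X * qCF true (a :: l) := by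
  simp only [qCF, qNum_succ', pow_succ']
  ring

/-- The hypothesis `1 ≤ a` matters only for `l = []`, where the normalisation replaces the single
coefficient `a` by `a - 1, 1`. -/
lemma qCF_evenize_succ (a : ℕ) (l : List ℕ) (ha : 1 ≤ a) :
    qCF true (evenize ((a + 1) :: l)) = 1 + RatFunc.X * qCF true (evenize (a :: l)) := by
  cases l with
  | nil =>
    obtain ⟨b, rfl⟩ := Nat.exists_eq_add_of_le' ha
    simpa [evenize] using qCF_succ b [1]
  | cons b t =>
    by_cases h : (t.length + 1 + 1) % 2 = 0
    · simpa [evenize, h] using qCF_succ a (b :: t)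
    · simpa [evenize, h] using qCF_succ a ((b :: t).dropLast ++ [(b :: t).getLast! - 1, 1])

lemma qRatCF_add_one (α : ℚ) (h : 1 ≤ α) : qRatCF (α + 1) = 1 + RatFunc.X * qRatCF α := by
  have hden : (α + 1).den = α.den := by
    exact_mod_cast Rat.add_natCast_den α 1
  have hnum : (α + 1).num = α.num + α.den := by
    have h1 := Rat.mul_den_eq_num (α + 1)
    rw [hden, add_mul, Rat.mul_den_eq_num, one_mul] at h1
    exact_mod_cast h1.symm
  have hle : (α.den : ℤ) ≤ α.num := by
    have := (Rat.le_iff (a := 1) (b := α)).1 h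
    simpa using this
  have hnat : (α + 1).num.toNat = α.num.toNat + α.den := by omega
  have hpos := α.den_pos
  have hc : cfNat α.num.toNat α.den =
      (α.num.toNat / α.den) :: cfNat α.den (α.num.toNat % α.den) := by
    rw [cfNat, dif_neg α.den_nz]
  have hc' : cfNat (α.num.toNat + α.den) α.den =
      (α.num.toNat / α.den + 1) :: cfNat α.den (α.num.toNat % α.den) := by
    rw [cfNat, dif_neg α.den_nz, Nat.add_div_right _ hpos, Nat.add_mod_right]
  rw [qRatCF, qRatCF, hden, hnat, hc, hc']
  exact qCF_evenize_succ _ _ ((Nat.one_le_div_iff hpos).2 (by omega))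

lemma qRatCF_add_nat (α : ℚ) (h : 1 ≤ α) (m : ℕ) :
    qRatCF (α + m) = qNum m + RatFunc.X ^ m * qRatCF α := by
  induction m with
  | zero => simp [qNum]
  | succ m ih =>
    have h1 : (1 : ℚ) ≤ α + m := by linarith [Nat.cast_nonneg (α := ℚ) m]
    rw [Nat.cast_succ, ← add_assoc, qRatCF_add_one _ h1, ih, qNum_succ', pow_succ']
    ring

/-- The value `[α]_q` can be read off from any translate `α + m ≥ 1`, not only from the one with
`m = 2 - ⌊α⌋` used in the definition. -/
lemma qRat_mul_pow_add (α : ℚ) (m : ℕ) (h : 1 ≤ α + m) :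
    qRat α * RatFunc.X ^ m + qNum m = qRatCF (α + m) := by
  have hX : (RatFunc.X : RatFunc ℚ) ≠ 0 := RatFunc.X_ne_zero
  unfold qRat
  split_ifs with hα
  · rw [qRatCF_add_nat α hα.le]
    ring
  · generalize hN : (2 - ⌊α⌋).toNat = N
    have hN1 : (1 : ℚ) ≤ α + N := by
      have h1 : (2 - ⌊α⌋ : ℤ) ≤ N := by omega
      have h2 : (2 - ⌊α⌋ : ℚ) ≤ N := by exact_mod_cast h1
      linarith [Int.floor_le α]
    rcases le_total N m with hle | hle
    · obtain ⟨d, rfl⟩ := Nat.exists_eq_add_of_le hle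
      rw [Nat.cast_add, ← add_assoc, qRatCF_add_nat _ hN1, add_comm N d, qNum_add]
      field_simp
      ring
    · obtain ⟨d, rfl⟩ := Nat.exists_eq_add_of_le' hle
      rw [Nat.cast_add, add_comm (d : ℚ), ← add_assoc, qRatCF_add_nat _ h, qNum_add]
      field_simp
      ring

lemma qRat_eq_qNum_add (α : ℚ) (i : ℕ) : qRat α = qNum i + RatFunc.X ^ i * qRat (α - i) := by
  induction i with
  | zero => simp [qNum]
  | succ i ih =>
    have h := qRat_add_one (α - (i + 1 : ℕ))
    rw [show α - (i + 1 : ℕ) + 1 = α - i by push_cast; ring] at h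
    rw [ih, h, qNum_add i 1]
    simp [qNum]
    ring

lemma one_sub_mul_qPow (α : ℚ) (i : ℕ) :
    1 - RatFunc.X ^ (-(i : ℤ)) * qPow α = (1 - RatFunc.X) * qRat (α - i) := by
  have hX : (RatFunc.X : RatFunc ℚ) ≠ 0 := RatFunc.X_ne_zero
  have h := one_sub_X_mul_qNum i
  rw [qPow, qRat_add_one, qRat_eq_qNum_add α i, zpow_neg, zpow_natCast]
  field_simp
  linear_combination h

/-- `binom(α,k)_q = ({α}_q; q⁻¹)_k / (q;q)_k`, i.e.
`binom(α,k)_q · ∏_{i=1}^{k}(1-q^i) = ∏_{i=0}^{k-1}(1 - q^{-i}·{α}_q)`. -/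
theorem qBinom_eq_pochhammer_inv (α : ℚ) (k : ℕ) :
    qBinom α k * ∏ i ∈ Finset.range k, (1 - RatFunc.X ^ (i + 1))
      = ∏ i ∈ Finset.range k, (1 - RatFunc.X ^ (-(i : ℤ)) * qPow α) := by
  rw [qBinom, qFact, ← Finset.prod_div_distrib, ← Finset.prod_mul_distrib]
  refine Finset.prod_congr rfl fun i _ => ?_
  rw [one_sub_mul_qPow, ← one_sub_X_mul_qNum]
  have := qNum_succ_ne_zero i
  field_simp

end
end
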